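/- For any list T_1, …, T_t of subsets of 𝒦 with compact form of the element rearrangement T*_{t,1}, …, T*_{t,t}, the set function b⁻(T) = I(V_T; Z | Q) satisfies ∑_{i=1}^{t} I(V_{T_i}; Z | Q) ≤ ∑_{i=1}^{t} I(V_{T*_{t,i}}; Z | Q). -/

import Mathlib

open scoped Classical

/-- Probability that the random variable `X` (on the finite sample space `Ω` with
probability mass function `p`) takes the value `a`. -/
noncomputable def prob {Ω : Type} [Fintype Ω] (p : Ω → ℝ) {α : Type} (X : Ω → α)
    (a : α) : ℝ :=
  ∑ ω : Ω, if X ω = a then p ω else 0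

/-- Shannon entropy (base 2) of the random variable `X`, with the convention
`0 · log 0 = 0`. -/
noncomputable def ent {Ω : Type} [Fintype Ω] (p : Ω → ℝ) {α : Type} [Fintype α]
    (X : Ω → α) : ℝ :=
  -∑ a : α, prob p X a * Real.logb 2 (prob p X a)

/-- Conditional mutual information `I(X; Y | Z) = H(X,Z) + H(Y,Z) - H(X,Y,Z) - H(Z)`. -/
noncomputable def condMI {Ω : Type} [Fintype Ω] (p : Ω → ℝ) {α β γ : Type}
    [Fintype α] [Fintype β] [Fintype γ] (X : Ω → α) (Y : Ω → β) (Z : Ω → γ) : ℝ :=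
  ent p (fun ω => (X ω, Z ω)) + ent p (fun ω => (Y ω, Z ω))
    - ent p (fun ω => (X ω, Y ω, Z ω)) - ent p Z

/-- The tuple-valued random variable `V_J = (V_j)_{j ∈ J}`. -/
def VJ {Ω : Type} {K : ℕ} {α : Fin K → Type} (V : (i : Fin K) → Ω → α i)
    (J : Finset (Fin K)) : Ω → ((j : J) → α j) :=
  fun ω j => V j ω

/-- `V_1, …, V_K` are mutually conditionally independent given `Q`:
`P(V_1 = v_1, …, V_K = v_K, Q = q) · P(Q = q)^(K-1) = ∏ i, P(V_i = v_i, Q = q)`. -/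
def CondIndep {Ω : Type} [Fintype Ω] {𝒬 : Type} {K : ℕ} {α : Fin K → Type}
    (p : Ω → ℝ) (Q : Ω → 𝒬) (V : (i : Fin K) → Ω → α i) : Prop :=
  ∀ (q : 𝒬) (v : (i : Fin K) → α i),
    prob p (fun ω => ((fun i => V i ω : (i : Fin K) → α i), Q ω)) (v, q)
        * (prob p Q q) ^ (K - 1)
      = ∏ i : Fin K, prob p (fun ω => (V i ω, Q ω)) (v i, q)

/-- The `i`-th set of the compact form of the element rearrangement of the list
`T 0, …, T (t-1)` of subsets of `Fin K`. -/
def compactForm {K t : ℕ} (T : Fin t → Finset (Fin K)) (i : ℕ) : Finset (Fin K) :=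
  (Finset.powersetCard i (Finset.univ : Finset (Fin t))).sup fun S => S.inf T

/-!
Conditional entropy is submodular: `J ↦ H(V_J | W)` satisfies the submodular inequality because
conditional mutual information is nonnegative (Gibbs' inequality). Conditional independence says
that `H(V_𝒦 | Q)` is the sum of the `H(V_j | Q)`, and a submodular function attaining this extreme
value on the whole set is additive. Hence `I(V_J; Z | Q) = H(V_J | Q) - H(V_J | Z, Q)` is a modular
function minus a submodular one, so it is supermodular in `J`. A supermodular function can only gain
in total when a new set `A` is inserted into a decreasing chain `C 0 ⊇ C 1 ⊇ ⋯`, which becomes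
`C (i + 1) ∪ (A ∩ C i)`. The compact form arises by inserting the sets of the list one at a time.
-/

section Lattice

variable {L M : Type*} [Lattice L]

/-- Submodularity of a function on a lattice; for set functions, `⊔` is union and `⊓` is
intersection. -/
def IsSubmodular [Add M] [LE M] (f : L → M) : Prop :=
  ∀ a b, f (a ⊔ b) + f (a ⊓ b) ≤ f a + f b

/-- Supermodularity of a function on a lattice; for set functions, `⊔` is union and `⊓` is
intersection. -/
def IsSupermodular [Add M] [LE M] (f : L → M) : Prop :=
  ∀ a b, f a + f b ≤ f (a ⊔ b) + f (a ⊓ b)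

theorem IsSupermodular.sub [AddCommGroup M] [PartialOrder M] [IsOrderedAddMonoid M] {f g : L → M}
    (hf : IsSupermodular f) (hg : IsSubmodular g) : IsSupermodular fun a => f a - g a := by
  intro a b
  rw [sub_add_sub_comm, sub_add_sub_comm]
  exact sub_le_sub (hf a b) (hg a b)

theorem IsSupermodular.add_sum_le_sum_insert_chain [AddCommMonoid M] [PartialOrder M]
    [IsOrderedAddMonoid M] {f : L → M} (hf : IsSupermodular f) {C : ℕ → L} (hC : Antitone C)
    (a : L) (n : ℕ) :
    f (a ⊓ C 0) + ∑ i ∈ Finset.range n, f (C (i + 1))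
      ≤ ∑ i ∈ Finset.range n, f (C (i + 1) ⊔ a ⊓ C i) + f (a ⊓ C n) := by
  induction n with
  | zero => simp
  | succ n ih =>
    have hinf : C (n + 1) ⊓ (a ⊓ C n) = a ⊓ C (n + 1) := by
      rw [inf_left_comm, inf_eq_left.2 (hC n.le_succ)]
    calc f (a ⊓ C 0) + ∑ i ∈ Finset.range (n + 1), f (C (i + 1))
        = f (a ⊓ C 0) + ∑ i ∈ Finset.range n, f (C (i + 1)) + f (C (n + 1)) := by
          rw [Finset.sum_range_succ, add_assoc]
      _ ≤ ∑ i ∈ Finset.range n, f (C (i + 1) ⊔ a ⊓ C i) + f (a ⊓ C n) + f (C (n + 1)) := by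
          gcongr
      _ = ∑ i ∈ Finset.range n, f (C (i + 1) ⊔ a ⊓ C i) + (f (C (n + 1)) + f (a ⊓ C n)) := by
          rw [add_assoc, add_comm (f (a ⊓ C n))]
      _ ≤ ∑ i ∈ Finset.range n, f (C (i + 1) ⊔ a ⊓ C i)
            + (f (C (n + 1) ⊔ a ⊓ C n) + f (a ⊓ C (n + 1))) := by
          refine add_le_add le_rfl ?_
          exact hinf ▸ hf (C (n + 1)) (a ⊓ C n)
      _ = ∑ i ∈ Finset.range (n + 1), f (C (i + 1) ⊔ a ⊓ C i) + f (a ⊓ C (n + 1)) := by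
          rw [Finset.sum_range_succ, add_assoc]

end Lattice

section SetFunction

variable {ι M : Type*} [DecidableEq ι] [AddCommMonoid M] [PartialOrder M] {h : Finset ι → M}

theorem IsSubmodular.le_sum_singleton [IsOrderedAddMonoid M] (hsub : IsSubmodular h)
    (hempty : h ∅ = 0) (J : Finset ι) : h J ≤ ∑ j ∈ J, h {j} := by
  induction J using Finset.induction_on with
  | empty => simp [hempty]
  | insert a s ha ih =>
    calc h (insert a s)
        = h ({a} ∪ s) + h ({a} ∩ s) := by
          rw [Finset.singleton_inter_of_notMem ha, hempty, add_zero, Finset.insert_eq]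
      _ ≤ h {a} + h s := hsub {a} s
      _ ≤ h {a} + ∑ j ∈ s, h {j} := by gcongr
      _ = ∑ j ∈ insert a s, h {j} := by rw [Finset.sum_insert ha]

variable [Fintype ι] [IsOrderedCancelAddMonoid M]

theorem IsSubmodular.eq_sum_singleton (hsub : IsSubmodular h) (hempty : h ∅ = 0)
    (huniv : h Finset.univ = ∑ j, h {j}) (J : Finset ι) : h J = ∑ j ∈ J, h {j} := by
  refine (hsub.le_sum_singleton hempty J).antisymm
    (le_of_add_le_add_right (a := ∑ j ∈ Jᶜ, h {j}) ?_)
  calc ∑ j ∈ J, h {j} + ∑ j ∈ Jᶜ, h {j}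
      = h (J ∪ Jᶜ) + h (J ∩ Jᶜ) := by
        rw [Finset.sum_add_sum_compl, ← huniv, Finset.union_compl, Finset.inter_compl, hempty,
          add_zero]
    _ ≤ h J + h Jᶜ := hsub J Jᶜ
    _ ≤ h J + ∑ j ∈ Jᶜ, h {j} := by
        gcongr
        exact hsub.le_sum_singleton hempty Jᶜ

theorem IsSubmodular.isSupermodular (hsub : IsSubmodular h) (hempty : h ∅ = 0)
    (huniv : h Finset.univ = ∑ j, h {j}) : IsSupermodular h := by
  intro A B
  have hsum := hsub.eq_sum_singleton hempty huniv
  rw [hsum A, hsum B, Finset.sup_eq_union, Finset.inf_eq_inter, hsum (A ∪ B), hsum (A ∩ B),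
    Finset.sum_union_inter]

end SetFunction

section CompactForm

variable {K t : ℕ}

theorem mem_compactForm {T : Fin t → Finset (Fin K)} {i : ℕ} {j : Fin K} :
    j ∈ compactForm T i ↔ i ≤ (Finset.univ.filter fun k => j ∈ T k).card := by
  simp only [compactForm, Finset.mem_sup, Finset.mem_powersetCard, Finset.subset_univ, true_and,
    Finset.mem_inf]
  constructor
  · rintro ⟨S, rfl, hS⟩
    exact Finset.card_le_card fun k hk => by simpa using hS k hk
  · intro hi
    obtain ⟨S, hS, hcard⟩ := Finset.exists_subset_card_eq hi
    exact ⟨S, hcard, fun k hk => by simpa using hS hk⟩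

theorem compactForm_antitone (T : Fin t → Finset (Fin K)) : Antitone (compactForm T) :=
  fun _ _ hik _ hj => mem_compactForm.2 (hik.trans (mem_compactForm.1 hj))

theorem compactForm_zero (T : Fin t → Finset (Fin K)) : compactForm T 0 = Finset.univ := by
  ext j
  simp [mem_compactForm]

theorem compactForm_eq_empty (T : Fin t → Finset (Fin K)) {i : ℕ} (hi : t < i) :
    compactForm T i = ∅ := by
  simp [compactForm, Finset.powersetCard_eq_empty.2, hi]

theorem compactForm_cons_succ (A : Finset (Fin K)) (T : Fin t → Finset (Fin K)) (i : ℕ) :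
    compactForm (Fin.cons A T : Fin (t + 1) → Finset (Fin K)) (i + 1)
      = compactForm T (i + 1) ∪ (A ∩ compactForm T i) := by
  ext j
  simp only [Finset.mem_union, Finset.mem_inter, mem_compactForm, Finset.card_filter,
    Fin.sum_univ_succ, Fin.cons_zero, Fin.cons_succ]
  by_cases hj : j ∈ A
  · simp only [hj, if_true, true_and]
    omega
  · simp only [hj, if_false, false_and, or_false, zero_add]

theorem IsSupermodular.sum_le_sum_compactForm {M : Type*} [AddCommMonoid M] [PartialOrder M]
    [IsOrderedAddMonoid M] {f : Finset (Fin K) → M} (hf : IsSupermodular f)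
    (T : Fin t → Finset (Fin K)) :
    ∑ i, f (T i) ≤ ∑ i ∈ Finset.Icc 1 t, f (compactForm T i) := by
  suffices ∑ i, f (T i) ≤ ∑ i ∈ Finset.range t, f (compactForm T (i + 1)) by
    rwa [Finset.range_eq_Ico, Finset.sum_Ico_add' (fun i => f (compactForm T i))] at this
  induction T using Fin.consInduction with
  | elim0 => simp
  | @cons t A T ih =>
    have hchain := hf.add_sum_le_sum_insert_chain (compactForm_antitone T) A t
    rw [compactForm_zero, Finset.inf_eq_inter, Finset.inter_univ] at hchain
    calc ∑ i, f ((Fin.cons A T : Fin (t + 1) → Finset (Fin K)) i)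
        = f A + ∑ i, f (T i) := by simp only [Fin.sum_univ_succ, Fin.cons_zero, Fin.cons_succ]
      _ ≤ f A + ∑ i ∈ Finset.range t, f (compactForm T (i + 1)) := by gcongr
      _ ≤ ∑ i ∈ Finset.range t, f (compactForm T (i + 1) ∪ A ∩ compactForm T i)
            + f (A ∩ compactForm T t) := hchain
      _ = ∑ i ∈ Finset.range (t + 1),
            f (compactForm (Fin.cons A T : Fin (t + 1) → Finset (Fin K)) (i + 1)) := by
          simp only [compactForm_cons_succ, Finset.sum_range_succ,
            compactForm_eq_empty T t.lt_succ_self, Finset.empty_union]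

end CompactForm

section Entropy

variable {Ω : Type} [Fintype Ω] {p : Ω → ℝ} {α β γ : Type}

theorem prob_nonneg (hp : ∀ ω, 0 ≤ p ω) (X : Ω → α) (a : α) : 0 ≤ prob p X a :=
  Finset.sum_nonneg fun ω _ => ite_nonneg (hp ω) le_rfl

theorem prob_apply_pos (hp : ∀ ω, 0 ≤ p ω) (X : Ω → α) {ω : Ω} (hω : 0 < p ω) :
    0 < prob p X (X ω) :=
  Finset.sum_pos' (fun ω _ => ite_nonneg (hp ω) le_rfl) ⟨ω, Finset.mem_univ ω, by simpa using hω⟩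

theorem sum_prob_prodMk [Fintype α] (X : Ω → α) (Y : Ω → β) (b : β) :
    ∑ a, prob p (fun ω => (X ω, Y ω)) (a, b) = prob p Y b := by
  simp only [prob, Prod.mk.injEq, ite_and]
  rw [Finset.sum_comm]
  simp

variable [Fintype α] [Fintype β] [Fintype γ]

theorem sum_prob_mul (X : Ω → α) (F : α → ℝ) : ∑ a, prob p X a * F a = ∑ ω, p ω * F (X ω) := by
  simp only [prob, Finset.sum_mul, ite_mul, zero_mul]
  rw [Finset.sum_comm]
  simp

theorem sum_prob_mul_prob_div_prob (X : Ω → α) (Y : Ω → β) (Z : Ω → γ) :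
    ∑ x : α × β × γ, prob p (fun ω => (X ω, Z ω)) (x.1, x.2.2)
        * prob p (fun ω => (Y ω, Z ω)) (x.2.1, x.2.2) / prob p Z x.2.2
      = ∑ ω, p ω := by
  simp only [Fintype.sum_prod_type_right, ← Finset.sum_div, ← Finset.sum_mul, ← Finset.mul_sum,
    sum_prob_prodMk, mul_self_div_self]
  simpa using sum_prob_mul (p := p) Z fun _ => 1

theorem ent_eq_neg_sum_mul_logb (X : Ω → α) :
    ent p X = -∑ ω, p ω * Real.logb 2 (prob p X (X ω)) := by
  rw [ent, sum_prob_mul X fun a => Real.logb 2 (prob p X a)]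

theorem ent_congr {X : Ω → α} {X' : Ω → β} (h : ∀ ω ω', X ω = X ω' ↔ X' ω = X' ω') :
    ent p X = ent p X' := by
  simp only [ent_eq_neg_sum_mul_logb, prob, h]

/-- **Gibbs' inequality**. -/
theorem ent_le_neg_sum_mul_logb (hp : ∀ ω, 0 ≤ p ω) (X : Ω → α) {q : α → ℝ} (hq : ∀ a, 0 ≤ q a)
    (hqX : ∀ ω, 0 < p ω → 0 < q (X ω)) (hsum : ∑ a, q a ≤ ∑ ω, p ω) :
    ent p X ≤ -∑ ω, p ω * Real.logb 2 (q (X ω)) := by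
  have hlog2 : 0 < Real.log 2 := Real.log_pos one_lt_two
  have hpoint : ∀ ω, p ω * Real.logb 2 (q (X ω)) - p ω * Real.logb 2 (prob p X (X ω))
      ≤ (p ω * (q (X ω) / prob p X (X ω)) - p ω) / Real.log 2 := by
    intro ω
    rcases (hp ω).eq_or_lt with hω | hω
    · simp [← hω]
    · have hPX := prob_apply_pos hp X hω
      rw [← mul_sub, ← Real.logb_div (hqX ω hω).ne' hPX.ne', Real.logb, ← mul_sub_one,
        mul_div_assoc]
      gcongr
      exact Real.log_le_sub_one_of_pos (div_pos (hqX ω hω) hPX)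
  have hratio : ∑ ω, p ω * (q (X ω) / prob p X (X ω)) ≤ ∑ ω, p ω := by
    rw [← sum_prob_mul X fun a => q a / prob p X a]
    refine (Finset.sum_le_sum fun a _ => ?_).trans hsum
    rw [mul_div_left_comm]
    exact mul_le_of_le_one_right (hq a) (div_self_le_one _)
  have htotal : ∑ ω, p ω * Real.logb 2 (q (X ω)) - ∑ ω, p ω * Real.logb 2 (prob p X (X ω)) ≤ 0 := by
    rw [← Finset.sum_sub_distrib]
    refine (Finset.sum_le_sum fun ω _ => hpoint ω).trans ?_
    rw [← Finset.sum_div, Finset.sum_sub_distrib]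
    exact div_nonpos_of_nonpos_of_nonneg (sub_nonpos.2 hratio) hlog2.le
  rw [ent_eq_neg_sum_mul_logb]
  linarith

/-- Gibbs' inequality for `(X, Y, Z)` against the law making `X` and `Y` conditionally independent
given `Z`. -/
theorem condMI_nonneg (hp : ∀ ω, 0 ≤ p ω) (X : Ω → α) (Y : Ω → β) (Z : Ω → γ) :
    0 ≤ condMI p X Y Z := by
  let PXZ := prob p fun ω => (X ω, Z ω)
  let PYZ := prob p fun ω => (Y ω, Z ω)
  let PZ := prob p Z
  have hXZ : ∀ ω, 0 < p ω → 0 < PXZ (X ω, Z ω) := fun _ => prob_apply_pos hp fun ω => (X ω, Z ω)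
  have hYZ : ∀ ω, 0 < p ω → 0 < PYZ (Y ω, Z ω) := fun _ => prob_apply_pos hp fun ω => (Y ω, Z ω)
  have hZ : ∀ ω, 0 < p ω → 0 < PZ (Z ω) := fun _ => prob_apply_pos hp Z
  have hgibbs := ent_le_neg_sum_mul_logb hp (fun ω => (X ω, Y ω, Z ω))
    (q := fun x => PXZ (x.1, x.2.2) * PYZ (x.2.1, x.2.2) / PZ x.2.2)
    (fun _ => div_nonneg (mul_nonneg (prob_nonneg hp _ _) (prob_nonneg hp _ _))
      (prob_nonneg hp _ _))
    (fun ω hω => div_pos (mul_pos (hXZ ω hω) (hYZ ω hω)) (hZ ω hω))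
    (sum_prob_mul_prob_div_prob X Y Z).le
  have hlog : ∀ ω, p ω * Real.logb 2 (PXZ (X ω, Z ω) * PYZ (Y ω, Z ω) / PZ (Z ω))
      = p ω * Real.logb 2 (PXZ (X ω, Z ω)) + p ω * Real.logb 2 (PYZ (Y ω, Z ω))
        - p ω * Real.logb 2 (PZ (Z ω)) := by
    intro ω
    rcases (hp ω).eq_or_lt with hω | hω
    · simp [← hω]
    · rw [Real.logb_div (mul_pos (hXZ ω hω) (hYZ ω hω)).ne' (hZ ω hω).ne',
        Real.logb_mul (hXZ ω hω).ne' (hYZ ω hω).ne', mul_sub, mul_add]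
  simp only [hlog, Finset.sum_sub_distrib, Finset.sum_add_distrib] at hgibbs
  rw [condMI, ent_eq_neg_sum_mul_logb fun ω => (X ω, Z ω),
    ent_eq_neg_sum_mul_logb fun ω => (Y ω, Z ω), ent_eq_neg_sum_mul_logb Z]
  linarith

/-- The conditional entropy `H(X | W)`, encoded through the chain rule as `H(X, W) - H(W)`. -/
noncomputable def condEnt (p : Ω → ℝ) (X : Ω → α) (W : Ω → β) : ℝ :=
  ent p (fun ω => (X ω, W ω)) - ent p W

theorem condMI_eq_condEnt_sub_condEnt (X : Ω → α) (Y : Ω → β) (Z : Ω → γ) :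
    condMI p X Y Z = condEnt p X Z - condEnt p X fun ω => (Y ω, Z ω) := by
  simp only [condMI, condEnt]
  ring

theorem condEnt_eq_neg_sum_mul_logb_sub (X : Ω → α) (W : Ω → β) :
    condEnt p X W = -∑ ω, p ω * (Real.logb 2 (prob p (fun ω => (X ω, W ω)) (X ω, W ω))
      - Real.logb 2 (prob p W (W ω))) := by
  simp only [condEnt, ent_eq_neg_sum_mul_logb, mul_sub, Finset.sum_sub_distrib]
  ring

theorem condEnt_congr {X : Ω → α} {X' : Ω → γ} (W : Ω → β)
    (h : ∀ ω ω', X ω = X ω' ↔ X' ω = X' ω') : condEnt p X W = condEnt p X' W := by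
  rw [condEnt, condEnt, ent_congr (X' := fun ω => (X' ω, W ω)) fun ω ω' => by
    rw [Prod.mk.injEq, Prod.mk.injEq, h]]

end Entropy

section Tuples

variable {Ω : Type} {K : ℕ} {α : Fin K → Type} {V : (i : Fin K) → Ω → α i}

theorem VJ_eq_iff {J : Finset (Fin K)} {ω ω' : Ω} :
    VJ V J ω = VJ V J ω' ↔ ∀ j ∈ J, V j ω = V j ω' := by
  simp [VJ, funext_iff]

variable [Fintype Ω] {p : Ω → ℝ}

theorem CondIndep.logb_prob_sub_logb_prob {𝒬 : Type} {Q : Ω → 𝒬} (hind : CondIndep p Q V)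
    (hp : ∀ ω, 0 ≤ p ω) {ω : Ω} (hω : 0 < p ω) :
    Real.logb 2 (prob p (fun ω => (fun i => V i ω, Q ω)) (fun i => V i ω, Q ω))
        - Real.logb 2 (prob p Q (Q ω))
      = ∑ i, (Real.logb 2 (prob p (fun ω => (V i ω, Q ω)) (V i ω, Q ω))
        - Real.logb 2 (prob p Q (Q ω))) := by
  -- for `K = 0` the exponent `K - 1` of `CondIndep` truncates to `0`
  rcases Nat.eq_zero_or_pos K with rfl | hK
  · simp [prob, eq_iff_true_of_subsingleton]
  have hlog := congrArg (Real.logb 2) (hind (Q ω) fun i => V i ω)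
  rw [Real.logb_mul (prob_apply_pos hp (fun ω => (fun i => V i ω, Q ω)) hω).ne'
      (pow_pos (prob_apply_pos hp Q hω) _).ne', Real.logb_pow,
    Real.logb_prod _ _ fun i _ => (prob_apply_pos hp (fun ω => (V i ω, Q ω)) hω).ne',
    Nat.cast_sub hK, Nat.cast_one] at hlog
  rw [Finset.sum_sub_distrib, ← hlog, Finset.sum_const, Finset.card_univ, Fintype.card_fin,
    nsmul_eq_mul]
  ring

variable [∀ i, Fintype (α i)]

theorem CondIndep.condEnt_pi {𝒬 : Type} [Fintype 𝒬] {Q : Ω → 𝒬} (hind : CondIndep p Q V)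
    (hp : ∀ ω, 0 ≤ p ω) : condEnt p (fun ω i => V i ω) Q = ∑ i, condEnt p (V i) Q := by
  simp only [condEnt_eq_neg_sum_mul_logb_sub, Finset.sum_neg_distrib]
  rw [Finset.sum_comm]
  congr! 2 with ω
  rw [← Finset.mul_sum]
  rcases (hp ω).eq_or_lt with hω | hω
  · simp [← hω]
  · rw [hind.logb_prob_sub_logb_prob hp hω]

variable {𝒲 : Type} [Fintype 𝒲]

theorem condEnt_VJ_empty (W : Ω → 𝒲) : condEnt p (VJ V ∅) W = 0 :=
  sub_eq_zero.2 (ent_congr fun ω ω' => by simp [VJ_eq_iff])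

theorem condEnt_VJ_singleton (W : Ω → 𝒲) (j : Fin K) :
    condEnt p (VJ V {j}) W = condEnt p (V j) W :=
  condEnt_congr W fun ω ω' => by simp [VJ_eq_iff]

theorem condEnt_VJ_univ (W : Ω → 𝒲) :
    condEnt p (VJ V Finset.univ) W = condEnt p (fun ω i => V i ω) W :=
  condEnt_congr W fun ω ω' => by simp [VJ, funext_iff]

/-- The defect in the submodular inequality is `I(V_A; V_B | V_{A ∩ B}, W)`. -/
theorem isSubmodular_condEnt_VJ (hp : ∀ ω, 0 ≤ p ω) (V : (i : Fin K) → Ω → α i) (W : Ω → 𝒲) :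
    IsSubmodular fun J => condEnt p (VJ V J) W := by
  intro A B
  have hMI := condMI_nonneg hp (VJ V A) (VJ V B) fun ω => (VJ V (A ∩ B) ω, W ω)
  have habsorb : ∀ J, A ∩ B ⊆ J → ent p (fun ω => (VJ V J ω, VJ V (A ∩ B) ω, W ω))
      = ent p (fun ω => (VJ V J ω, W ω)) := fun J hJ => ent_congr fun ω ω' => by
    simp only [Prod.mk.injEq, VJ_eq_iff]
    grind
  have hunion : ent p (fun ω => (VJ V A ω, VJ V B ω, VJ V (A ∩ B) ω, W ω))
      = ent p (fun ω => (VJ V (A ∪ B) ω, W ω)) := ent_congr fun ω ω' => by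
    simp only [Prod.mk.injEq, VJ_eq_iff]
    grind
  rw [condMI, habsorb A Finset.inter_subset_left, habsorb B Finset.inter_subset_right,
    hunion] at hMI
  simp only [condEnt, Finset.sup_eq_union, Finset.inf_eq_inter]
  linarith

theorem CondIndep.isSupermodular_condEnt_VJ {𝒬 : Type} [Fintype 𝒬] {Q : Ω → 𝒬}
    (hind : CondIndep p Q V) (hp : ∀ ω, 0 ≤ p ω) :
    IsSupermodular fun J => condEnt p (VJ V J) Q :=
  (isSubmodular_condEnt_VJ hp V Q).isSupermodular (condEnt_VJ_empty Q) <| by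
    simp only [condEnt_VJ_univ, condEnt_VJ_singleton, hind.condEnt_pi hp]

theorem CondIndep.isSupermodular_condMI_VJ {𝒬 𝒵 : Type} [Fintype 𝒬] [Fintype 𝒵] {Q : Ω → 𝒬}
    (hind : CondIndep p Q V) (hp : ∀ ω, 0 ≤ p ω) (Z : Ω → 𝒵) :
    IsSupermodular fun J => condMI p (VJ V J) Z Q := by
  simp only [condMI_eq_condEnt_sub_condEnt]
  exact (hind.isSupermodular_condEnt_VJ hp).sub (isSubmodular_condEnt_VJ hp V _)

end Tuples

/-- Lemma 5 (second half): for any list `T_1, …, T_t` of subsets of `𝒦` with compact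
form `T*_{t,1}, …, T*_{t,t}`, the set function `b⁻(T) = I(V_T; Z | Q)`
satisfies `∑ᵢ b⁻(T_i) ≤ ∑ᵢ b⁻(T*_{t,i})`. -/
theorem bminus_sum_le_compactForm {Ω 𝒬 𝒴 𝒵 : Type} [Fintype Ω] [Fintype 𝒬] [Fintype 𝒴]
    [Fintype 𝒵] {K : ℕ} {α : Fin K → Type} [∀ i, Fintype (α i)]
    (p : Ω → ℝ) (hp : ∀ ω, 0 ≤ p ω) (hp1 : ∑ ω : Ω, p ω = 1)
    (Q : Ω → 𝒬) (Y : Ω → 𝒴) (Z : Ω → 𝒵) (V : (i : Fin K) → Ω → α i)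
    (hind : CondIndep p Q V) (t : ℕ) (T : Fin t → Finset (Fin K)) :
    ∑ i : Fin t, condMI p (VJ V (T i)) Z Q
      ≤ ∑ i ∈ Finset.Icc 1 t, condMI p (VJ V (compactForm T i)) Z Q :=
  (hind.isSupermodular_condMI_VJ hp Z).sum_le_sum_compactForm T
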